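/- The kernel S(x,y) = 1/(1 + ‖x−y‖) is positive definite on ℂⁿ, where ‖·‖ is the Euclidean norm. -/

import Mathlib

open Finset Complex

/-- A (real-valued) kernel `k : X → X → ℝ` is positive definite if every finite quadratic
form `∑_{j,i} conj (c i) * k (x i) (x j) * c j` with complex coefficients is a nonnegative
real number. -/
def IsPositiveDefiniteKernelR {X : Type*} (k : X → X → ℝ) : Prop :=
  ∀ (N : ℕ) (x : Fin N → X) (c : Fin N → ℂ),
    (∑ j, ∑ i, (starRingEnd ℂ) (c i) * (k (x i) (x j) : ℂ) * c j).im = 0 ∧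
    0 ≤ (∑ j, ∑ i, (starRingEnd ℂ) (c i) * (k (x i) (x j) : ℂ) * c j).re

/-!
The kernel `1 / (1 + ‖x - y‖)` is a superposition of Gaussian kernels. The Gaussian
`exp (-t * ‖x - y‖ ^ 2)` is a rank one kernel times the exponential of a multiple of the inner
product, so it is positive definite by the Schur product theorem. Integrating it against
`exp (-c * t)` over `t > 0` gives `(c + ‖x - y‖ ^ 2)⁻¹`, and the Stieltjes representation
`π / (1 + r) = ∫ u ^ 2 / (1 + u ^ 2) * (u ^ 2 + r ^ 2)⁻¹ du` removes the square.
-/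

open MeasureTheory Filter Topology Matrix
open scoped ComplexOrder Nat

section PosSemidef

variable {n 𝕜 : Type*} [RCLike 𝕜]

theorem isClosed_setOf_posSemidef : IsClosed {A : Matrix n n 𝕜 | A.PosSemidef} := by
  simp only [Matrix.PosSemidef, Matrix.IsHermitian, Finsupp.sum, Set.ofPred_and, Set.ofPred_forall]
  refine (isClosed_eq (by fun_prop) continuous_id).inter (isClosed_iInter fun c ↦ ?_)
  exact isClosed_le continuous_const (by fun_prop)

theorem posSemidef_of_hasSum {ι : Type*} {A : ι → Matrix n n 𝕜} {B : Matrix n n 𝕜}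
    (hA : ∀ k, (A k).PosSemidef) (hAB : HasSum A B) : B.PosSemidef :=
  isClosed_setOf_posSemidef.mem_of_tendsto hAB <|
    .of_forall fun s ↦ posSemidef_sum s fun k _ ↦ hA k

theorem posSemidef_integral {α : Type*} [MeasurableSpace α] {μ : Measure α}
    {A : α → Matrix n n 𝕜} (hint : ∀ i j, Integrable (fun t ↦ A t i j) μ)
    (hA : ∀ᵐ t ∂μ, (A t).PosSemidef) :
    (Matrix.of fun i j ↦ ∫ t, A t i j ∂μ).PosSemidef := by
  refine ⟨?_, fun c ↦ ?_⟩
  · ext i j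
    simp only [conjTranspose_apply, of_apply, RCLike.star_def, ← integral_conj]
    exact integral_congr_ae <| hA.mono fun t ht ↦ ht.isHermitian.apply i j
  · have hform : (c.sum fun i ci ↦ c.sum fun j cj ↦ star ci * (∫ t, A t i j ∂μ) * cj) =
        ∫ t, c.sum fun i ci ↦ c.sum fun j cj ↦ star ci * A t i j * cj ∂μ := by
      have hterm i j : Integrable (fun t ↦ star (c i) * A t i j * c j) μ :=
        ((hint i j).const_mul _).mul_const _
      simp only [Finsupp.sum, integral_finsetSum _ fun i _ ↦ integrable_finsetSum _ fun j _ ↦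
        hterm i j, integral_finsetSum _ fun j _ ↦ hterm _ j, integral_mul_const,
        integral_const_mul]
    simp only [of_apply]
    rw [hform]
    exact integral_nonneg_of_ae <| hA.mono fun t ht ↦ ht.2 c

variable [Finite n]

theorem posSemidef_map_pow {A : Matrix n n 𝕜} (hA : A.PosSemidef) (k : ℕ) :
    (A.map (· ^ k)).PosSemidef := by
  induction k with
  | zero =>
    have hone : A.map (· ^ 0) = vecMulVec 1 (star 1) := by
      ext i j
      simp [vecMulVec]
    exact hone ▸ posSemidef_vecMulVec_self_star 1
  | succ k ih => simpa only [Matrix.map, pow_succ] using! ih.hadamard hA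

theorem posSemidef_map_exp {A : Matrix n n 𝕜} (hA : A.PosSemidef) :
    (A.map NormedSpace.exp).PosSemidef := by
  have hsum : HasSum (fun k : ℕ ↦ (k !⁻¹ : ℝ) • A.map (· ^ k)) (A.map NormedSpace.exp) :=
    Pi.hasSum.2 fun i ↦ Pi.hasSum.2 fun j ↦ NormedSpace.exp_series_hasSum_exp' (A i j)
  exact posSemidef_of_hasSum (fun k ↦ (posSemidef_map_pow hA k).smul (by positivity)) hsum

open scoped MatrixOrder in
theorem posSemidef_map_ofReal {A : Matrix n n ℝ} (hA : A.PosSemidef) :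
    (A.map ((↑) : ℝ → 𝕜)).PosSemidef := by
  have := Fintype.ofFinite n
  classical
  obtain ⟨B, rfl⟩ := CStarAlgebra.nonneg_iff_eq_star_mul_self.mp hA.nonneg
  have hmap : (star B * B).map ((↑) : ℝ → 𝕜) =
      (B.map ((↑) : ℝ → 𝕜))ᴴ * B.map ((↑) : ℝ → 𝕜) := by
    ext i j
    simp [Matrix.mul_apply]
  exact hmap ▸ posSemidef_conjTranspose_mul_self _

end PosSemidef

theorem isPositiveDefiniteKernelR_of_posSemidef {X : Type*} {k : X → X → ℝ}
    (hk : ∀ (N : ℕ) (x : Fin N → X), (Matrix.of fun i j ↦ k (x i) (x j)).PosSemidef) :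
    IsPositiveDefiniteKernelR k := by
  intro N x c
  have hform := (posSemidef_map_ofReal (𝕜 := ℂ) (hk N x)).dotProduct_mulVec_nonneg c
  rw [Complex.nonneg_iff] at hform
  simp only [dotProduct, mulVec, Finset.mul_sum, ← mul_assoc, Matrix.map_apply, of_apply] at hform
  rw [Finset.sum_comm]
  exact ⟨hform.2.symm, hform.1⟩

section Stieltjes

theorem sq_div_sq_add_sq_eq_inv_one_add_div_sq {r : ℝ} (hr : r ≠ 0) (u : ℝ) :
    r ^ 2 / (u ^ 2 + r ^ 2) = (1 + (u / r) ^ 2)⁻¹ := by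
  field_simp
  ring

theorem integrable_sq_div_sq_add_sq (r : ℝ) :
    Integrable fun u : ℝ ↦ r ^ 2 / (u ^ 2 + r ^ 2) := by
  rcases eq_or_ne r 0 with rfl | hr
  · simp
  · simpa only [sq_div_sq_add_sq_eq_inv_one_add_div_sq hr] using
      integrable_inv_one_add_sq.comp_div hr

theorem integral_sq_div_sq_add_sq (r : ℝ) :
    ∫ u : ℝ, r ^ 2 / (u ^ 2 + r ^ 2) = Real.pi * |r| := by
  rcases eq_or_ne r 0 with rfl | hr
  · simp
  · simp only [sq_div_sq_add_sq_eq_inv_one_add_div_sq hr]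
    rw [Measure.integral_comp_div (fun u : ℝ ↦ (1 + u ^ 2)⁻¹) r, integral_univ_inv_one_add_sq,
      smul_eq_mul, mul_comm]

theorem integrable_sq_div_one_add_sq_mul_inv (r : ℝ) :
    Integrable fun u : ℝ ↦ u ^ 2 / (1 + u ^ 2) * (u ^ 2 + r ^ 2)⁻¹ := by
  refine integrable_inv_one_add_sq.mono' (by fun_prop) (.of_forall fun u ↦ ?_)
  calc ‖u ^ 2 / (1 + u ^ 2) * (u ^ 2 + r ^ 2)⁻¹‖
      = u ^ 2 / (u ^ 2 + r ^ 2) * (1 + u ^ 2)⁻¹ := by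
        rw [Real.norm_of_nonneg (by positivity)]
        ring
    _ ≤ (1 + u ^ 2)⁻¹ :=
        mul_le_of_le_one_left (by positivity) <|
          div_le_one_of_le₀ (le_add_of_nonneg_right (sq_nonneg r)) (by positivity)

theorem integral_sq_div_one_add_sq_mul_inv_one_add_sq :
    ∫ u : ℝ, u ^ 2 / (1 + u ^ 2) * (1 + u ^ 2)⁻¹ = Real.pi / 2 := by
  -- The substitution `u = tan θ` turns the integrand into `sin θ ^ 2`, with antiderivative `F`.
  let F (θ : ℝ) := (θ - Real.sin θ * Real.cos θ) / 2
  have hF (θ : ℝ) : HasDerivAt F (Real.sin θ ^ 2) θ := by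
    refine (((hasDerivAt_id θ).sub
      ((Real.hasDerivAt_sin θ).mul (Real.hasDerivAt_cos θ))).div_const 2).congr_deriv ?_
    linarith [Real.sin_sq_add_cos_sq θ]
  have hderiv (u : ℝ) : HasDerivAt (fun u ↦ F (Real.arctan u))
      (u ^ 2 / (1 + u ^ 2) * (1 + u ^ 2)⁻¹) u := by
    simpa only [Real.sin_sq_arctan, one_div] using! (hF _).comp u (Real.hasDerivAt_arctan u)
  have hlim {l : Filter ℝ} {θ : ℝ} {s : Set ℝ} (h : Tendsto Real.arctan l (𝓝[s] θ)) :
      Tendsto (fun u ↦ F (Real.arctan u)) l (𝓝 (F θ)) :=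
    (hF θ).continuousAt.tendsto.comp (tendsto_nhds_of_tendsto_nhdsWithin h)
  have hint : Integrable fun u : ℝ ↦ u ^ 2 / (1 + u ^ 2) * (1 + u ^ 2)⁻¹ := by
    simpa only [one_pow, add_comm] using integrable_sq_div_one_add_sq_mul_inv 1
  rw [integral_of_hasDerivAt_of_tendsto hderiv hint (hlim Real.tendsto_arctan_atBot)
    (hlim Real.tendsto_arctan_atTop)]
  simp only [F, Real.cos_neg, Real.cos_pi_div_two]
  ring

theorem integral_sq_div_one_add_sq_mul_inv {r : ℝ} (hr : 0 ≤ r) :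
    ∫ u : ℝ, u ^ 2 / (1 + u ^ 2) * (u ^ 2 + r ^ 2)⁻¹ = Real.pi * (1 + r)⁻¹ := by
  -- The partial fraction decomposition degenerates at `r = 1`.
  rcases eq_or_ne r 1 with rfl | hr1
  · simp only [one_pow, add_comm _ (1 : ℝ), integral_sq_div_one_add_sq_mul_inv_one_add_sq]
    norm_num [div_eq_mul_inv]
  have hsub : 1 - r ≠ 0 := sub_ne_zero.2 hr1.symm
  have hadd : 1 + r ≠ 0 := by positivity
  have hsq : 1 - r ^ 2 = (1 - r) * (1 + r) := by ring
  calc ∫ u : ℝ, u ^ 2 / (1 + u ^ 2) * (u ^ 2 + r ^ 2)⁻¹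
      = ∫ u : ℝ, (1 - r ^ 2)⁻¹ * ((1 + u ^ 2)⁻¹ - r ^ 2 / (u ^ 2 + r ^ 2)) := by
        refine integral_congr_ae ?_
        filter_upwards [Measure.ae_ne volume (0 : ℝ)] with u hu
        have : u ^ 2 + r ^ 2 ≠ 0 := by positivity
        rw [hsq]
        field_simp
        ring
    _ = (1 - r ^ 2)⁻¹ * (Real.pi - Real.pi * r) := by
        rw [integral_const_mul, integral_sub integrable_inv_one_add_sq
          (integrable_sq_div_sq_add_sq r), integral_univ_inv_one_add_sq,
          integral_sq_div_sq_add_sq, abs_of_nonneg hr]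
    _ = Real.pi * (1 + r)⁻¹ := by
        rw [hsq]
        field_simp

end Stieltjes

section Mixture

variable {n : Type*} {D : Matrix n n ℝ}

theorem posSemidef_map_inv_const_add (hD : ∀ i j, 0 ≤ D i j)
    (hexp : ∀ t : ℝ, 0 < t → (D.map fun d ↦ Real.exp (-t * d)).PosSemidef) {c : ℝ} (hc : 0 < c) :
    (D.map fun d ↦ (c + d)⁻¹).PosSemidef := by
  have hneg i j : -(c + D i j) < 0 := neg_lt_zero.2 (add_pos_of_pos_of_nonneg hc (hD i j))
  have hlaplace : (D.map fun d ↦ (c + d)⁻¹) =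
      Matrix.of fun i j ↦ ∫ t in Set.Ioi (0 : ℝ), Real.exp (-(c + D i j) * t) := by
    ext i j
    rw [of_apply, integral_exp_mul_Ioi (hneg i j), mul_zero, Real.exp_zero, neg_div_neg_eq,
      one_div, map_apply]
  rw [hlaplace]
  refine posSemidef_integral
    (A := fun t ↦ Matrix.of fun i j ↦ Real.exp (-(c + D i j) * t))
    (fun i j ↦ integrableOn_exp_mul_Ioi (hneg i j) 0) ?_
  filter_upwards [ae_restrict_mem measurableSet_Ioi] with t ht
  have hsmul : (Matrix.of fun i j ↦ Real.exp (-(c + D i j) * t)) =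
      Real.exp (-c * t) • D.map fun d ↦ Real.exp (-t * d) := by
    ext i j
    simp only [of_apply, Matrix.smul_apply, map_apply, smul_eq_mul, ← Real.exp_add]
    ring_nf
  exact hsmul ▸ (hexp t ht).smul (Real.exp_nonneg _)

theorem posSemidef_map_inv_one_add_sqrt (hD : ∀ i j, 0 ≤ D i j)
    (hinv : ∀ c : ℝ, 0 < c → (D.map fun d ↦ (c + d)⁻¹).PosSemidef) :
    (D.map fun d ↦ (1 + √d)⁻¹).PosSemidef := by
  have hstieltjes : (D.map fun d ↦ (1 + √d)⁻¹) = Real.pi⁻¹ •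
      Matrix.of fun i j ↦ ∫ u : ℝ, u ^ 2 / (1 + u ^ 2) * (u ^ 2 + √(D i j) ^ 2)⁻¹ := by
    ext i j
    rw [Matrix.smul_apply, of_apply, integral_sq_div_one_add_sq_mul_inv (Real.sqrt_nonneg _),
      smul_eq_mul, inv_mul_cancel_left₀ Real.pi_ne_zero, map_apply]
  rw [hstieltjes]
  refine PosSemidef.smul (posSemidef_integral
    (A := fun u : ℝ ↦ Matrix.of fun i j ↦ u ^ 2 / (1 + u ^ 2) * (u ^ 2 + √(D i j) ^ 2)⁻¹)
    (fun i j ↦ integrable_sq_div_one_add_sq_mul_inv _) ?_) (inv_nonneg.2 Real.pi_nonneg)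
  filter_upwards [Measure.ae_ne volume (0 : ℝ)] with u hu
  have hsmul : (Matrix.of fun i j ↦ u ^ 2 / (1 + u ^ 2) * (u ^ 2 + √(D i j) ^ 2)⁻¹) =
      (u ^ 2 / (1 + u ^ 2)) • D.map fun d ↦ (u ^ 2 + d)⁻¹ := by
    ext i j
    simp only [of_apply, Matrix.smul_apply, map_apply, smul_eq_mul, Real.sq_sqrt (hD i j)]
  exact hsmul ▸ (hinv (u ^ 2) (by positivity)).smul (by positivity)

end Mixture

section InnerProductSpace

variable {E : Type*} [NormedAddCommGroup E] [InnerProductSpace ℝ E]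

theorem posSemidef_exp_neg_mul_norm_sub_sq {n : Type*} [Finite n] (x : n → E) {t : ℝ}
    (ht : 0 ≤ t) : (Matrix.of fun i j ↦ Real.exp (-t * ‖x i - x j‖ ^ 2)).PosSemidef := by
  let g (i : n) : ℝ := Real.exp (-t * ‖x i‖ ^ 2)
  have hfactor : (Matrix.of fun i j ↦ Real.exp (-t * ‖x i - x j‖ ^ 2)) =
      vecMulVec g (star g) ⊙ ((2 * t) • gram ℝ x).map NormedSpace.exp := by
    ext i j
    simp only [g, ← Real.exp_eq_exp_ℝ, of_apply, hadamard_apply, vecMulVec_apply, star_trivial,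
      map_apply, Matrix.smul_apply, gram_apply, smul_eq_mul, norm_sub_sq_real, ← Real.exp_add]
    ring_nf
  rw [hfactor]
  exact (posSemidef_vecMulVec_self_star g).hadamard <|
    posSemidef_map_exp <| (posSemidef_gram ℝ x).smul (by positivity)

theorem inv_one_add_dist_positive_definite_general :
    IsPositiveDefiniteKernelR (fun x y : E ↦ 1 / (1 + ‖x - y‖)) := by
  refine isPositiveDefiniteKernelR_of_posSemidef fun N x ↦ ?_
  let D : Matrix (Fin N) (Fin N) ℝ := Matrix.of fun i j ↦ ‖x i - x j‖ ^ 2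
  have hD i j : 0 ≤ D i j := sq_nonneg _
  have hinv (c : ℝ) (hc : 0 < c) : (D.map fun d ↦ (c + d)⁻¹).PosSemidef :=
    posSemidef_map_inv_const_add hD
      (fun t ht ↦ posSemidef_exp_neg_mul_norm_sub_sq x ht.le) hc
  have hentries : (Matrix.of fun i j ↦ 1 / (1 + ‖x i - x j‖)) = D.map fun d ↦ (1 + √d)⁻¹ := by
    ext i j
    simp only [D, of_apply, map_apply, Real.sqrt_sq (norm_nonneg _), one_div]
  exact hentries ▸ posSemidef_map_inv_one_add_sqrt hD hinv

end InnerProductSpace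

theorem inv_one_add_dist_positive_definite (n : ℕ) :
    IsPositiveDefiniteKernelR
      (fun x y : EuclideanSpace ℂ (Fin n) => 1 / (1 + ‖x - y‖)) := by
  let _ : InnerProductSpace ℝ (EuclideanSpace ℂ (Fin n)) := .rclikeToReal ℂ _
  exact inv_one_add_dist_positive_definite_general
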